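/- Let A be a *-algebra and let p, f, g be representable positive functionals on A such that p ≤ f, f is absolutely continuous with respect to g, p and g are singular, and p ≠ 0. Then the Lebesgue decomposition of the representable positive functional h := f + p with respect to g is not unique. -/

import Mathlib

/-!
Besides `f + p`, the trivial splitting `h + 0` of `h` is a Lebesgue decomposition, because
`f ≤ h ≤ 2f` and absolute continuity is inherited by `h` from `f`.

To see the latter, realise `h + g` by a cyclic vector `ξ` of a representation `π` on `H`. The
functionals `f`, `h`, `g` below it have the form `a ↦ ⟪ξ, R (π a ξ)⟫` for positive operators
`R = F, T, S` in the commutant of `π`, and `T + S = 1`, so `T` and `S` commute. Absolute continuity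
of `f` gives `ker S ⊆ ker F`, hence `ker S ⊆ ker T`, hence `ker S = 0`. The functional calculus of
`S` then provides operators `φₙ(S) ≤ (n + 1) S` increasing strongly to `1`, and `T φₙ(S)` are
weights of functionals that exhibit `h ≪ g`.
-/

open scoped ComplexOrder InnerProductSpace

section StarAlgebraDefs

variable {A : Type} [NonUnitalRing A] [Module ℂ A] [SMulCommClass ℂ A A]
  [IsScalarTower ℂ A A] [StarRing A] [StarModule ℂ A]

/-- A linear functional on a `⋆`-algebra is positive if `0 ≤ f (a⋆ * a)` for every `a`. -/
def IsPosFn (f : A →ₗ[ℂ] ℂ) : Prop := ∀ a : A, 0 ≤ f (star a * a)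

/-- Order on positive functionals: `f ≤ g` iff `g - f` is positive. -/
def FnLE (f g : A →ₗ[ℂ] ℂ) : Prop := IsPosFn (g - f)

/-- `f` is induced by a `⋆`-representation on the Hilbert space `H` with a cyclic vector. -/
def IsRepOn (f : A →ₗ[ℂ] ℂ) (H : Type) [NormedAddCommGroup H]
    [InnerProductSpace ℂ H] [CompleteSpace H] : Prop :=
  ∃ (π : A →⋆ₙₐ[ℂ] (H →L[ℂ] H)) (ξ : H),
    DenseRange (fun a : A => π a ξ) ∧ ∀ a : A, f a = ⟪ξ, π a ξ⟫_ℂ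

/-- A positive linear functional is representable if it is induced by a cyclic
`⋆`-representation on some complex Hilbert space. -/
def IsRepresentable (f : A →ₗ[ℂ] ℂ) : Prop :=
  ∃ (H : Type) (_ : NormedAddCommGroup H) (_ : InnerProductSpace ℂ H) (_ : CompleteSpace H),
    IsRepOn f H

/-- Absolute continuity `f ≪ g` for representable positive functionals: `f` is the pointwise
limit of an increasing sequence of representable positive functionals `fₙ` with
`fₙ ≤ αₙ • g` for some positive reals `αₙ`. -/
def AbsContR (f g : A →ₗ[ℂ] ℂ) : Prop :=
  ∃ (fn : ℕ → (A →ₗ[ℂ] ℂ)) (α : ℕ → ℝ),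
    (∀ n, IsRepresentable (fn n) ∧ IsPosFn (fn n)) ∧
    (∀ n, 0 < α n) ∧
    (∀ n, FnLE (fn n) (fn (n + 1))) ∧
    (∀ n, FnLE (fn n) (((α n : ℂ)) • g)) ∧
    (∀ a : A, Filter.Tendsto (fun n => fn n a) Filter.atTop (nhds (f a)))

/-- Singularity `f ⊥ g` for representable positive functionals: the only representable
positive functional dominated by both `f` and `g` is `0`. -/
def SingularR (f g : A →ₗ[ℂ] ℂ) : Prop :=
  ∀ p : A →ₗ[ℂ] ℂ, IsRepresentable p → IsPosFn p → FnLE p f → FnLE p g → p = 0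

/-- `f = fr + fs` is a Lebesgue decomposition of `f` with respect to `g` (representable
positive functionals). -/
def IsLebDecompR (f g fr fs : A →ₗ[ℂ] ℂ) : Prop :=
  IsRepresentable fr ∧ IsPosFn fr ∧ IsRepresentable fs ∧ IsPosFn fs ∧
    f = fr + fs ∧ AbsContR fr g ∧ SingularR fs g

/-- The Lebesgue decomposition of `f` with respect to `g` is unique. -/
def LebDecompUniqueForR (f g : A →ₗ[ℂ] ℂ) : Prop :=
  ∀ fr fs fr' fs' : A →ₗ[ℂ] ℂ, IsLebDecompR f g fr fs → IsLebDecompR f g fr' fs' →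
    fr = fr' ∧ fs = fs'

end StarAlgebraDefs

/-- The Lebesgue decomposition of representable positive functionals over `A` is unique. -/
def LebDecompUniqueR (A : Type) [NonUnitalRing A] [Module ℂ A] [SMulCommClass ℂ A A]
    [IsScalarTower ℂ A A] [StarRing A] [StarModule ℂ A] : Prop :=
  ∀ f g : A →ₗ[ℂ] ℂ, IsRepresentable f → IsPosFn f → IsRepresentable g → IsPosFn g →
    LebDecompUniqueForR f g

open Filter Topology ContinuousLinearMap

section Truncation

variable {B : Type*} [CStarAlgebra B]

/-- The spectral truncation `min 1 ((n + 1) s)` of an element `a`, a substitute for the support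
projection of a positive `a` which is dominated by a multiple of `a`. -/
noncomputable def truncation (a : B) (n : ℕ) : B :=
  cfc (fun s : ℝ => min 1 ((n + 1) * s)) a

theorem commute_truncation_left {a b : B} (hab : Commute a b) (n : ℕ) :
    Commute (truncation a n) b :=
  hab.cfc_real _

variable [PartialOrder B] [StarOrderedRing B] {a : B}

theorem truncation_nonneg (ha : 0 ≤ a) (n : ℕ) : 0 ≤ truncation a n :=
  cfc_nonneg fun s hs => by
    have := spectrum_nonneg_of_nonneg ha hs
    positivity

theorem truncation_mono (ha : 0 ≤ a) : Monotone (truncation a) := fun m n hmn =>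
  cfc_mono fun s hs => by
    have := spectrum_nonneg_of_nonneg ha hs
    gcongr

theorem truncation_le_smul (ha : 0 ≤ a) (n : ℕ) : truncation a n ≤ ((n : ℝ) + 1) • a := by
  rw [← cfc_const_mul_id ((n : ℝ) + 1) a]
  exact cfc_mono fun s _ => min_le_right _ _

theorem norm_truncation_le_one (ha : 0 ≤ a) (n : ℕ) : ‖truncation a n‖ ≤ 1 :=
  norm_cfc_le zero_le_one fun s hs => by
    have := spectrum_nonneg_of_nonneg ha hs
    rw [Real.norm_of_nonneg (by positivity)]
    exact min_le_left _ _

theorem norm_truncation_mul_self_sub_le (ha : 0 ≤ a) (n : ℕ) :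
    ‖truncation a n * a - a‖ ≤ 1 / ((n : ℝ) + 1) := by
  have hcfc : truncation a n * a - a = cfc (fun s : ℝ => min 1 ((n + 1) * s) * s - s) a := by
    rw [cfc_sub .., cfc_mul .., cfc_id' ℝ a, truncation]
  rw [hcfc]
  refine norm_cfc_le (by positivity) fun s hs => ?_
  have hs0 := spectrum_nonneg_of_nonneg ha hs
  rcases le_total 1 ((n + 1) * s) with h | h
  · rw [min_eq_left h, one_mul, sub_self, norm_zero]
    positivity
  · have hs_le : s ≤ 1 / ((n : ℝ) + 1) := (le_div_iff₀' (by positivity)).2 h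
    rw [min_eq_right h, ← sub_one_mul, norm_mul, Real.norm_of_nonpos (sub_nonpos.2 h),
      Real.norm_of_nonneg hs0]
    exact (mul_le_of_le_one_left hs0 (by linarith [show 0 ≤ (n + 1) * s by positivity])).trans hs_le

end Truncation

section HilbertSpace

variable {H : Type*} [NormedAddCommGroup H] [InnerProductSpace ℂ H]

theorem inner_apply_le_inner_apply {R S : H →L[ℂ] H} (hRS : R ≤ S) (x : H) :
    ⟪x, R x⟫_ℂ ≤ ⟪x, S x⟫_ℂ := by
  have hnonneg := ((le_def R S).1 hRS).inner_nonneg_right x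
  rwa [sub_apply, inner_sub_right, sub_nonneg] at hnonneg

variable [CompleteSpace H]

theorem apply_eq_zero_of_inner_le_zero {R : H →L[ℂ] H} (hR : 0 ≤ R) {x : H}
    (hx : ⟪x, R x⟫_ℂ ≤ 0) : R x = 0 := by
  have hself : adjoint (CFC.sqrt R) = CFC.sqrt R := (CFC.sqrt_nonneg R).isSelfAdjoint.adjoint_eq
  have hsqrt : CFC.sqrt R (CFC.sqrt R x) = R x := by
    rw [← mul_apply_eq_comp, CFC.sqrt_mul_sqrt_self R]
  rw [← hsqrt, ← adjoint_inner_left, hself] at hx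
  have hzero : CFC.sqrt R x = 0 :=
    inner_self_eq_zero.1 (le_antisymm hx (RCLike.nonneg_iff.2 ⟨inner_self_nonneg, inner_self_im _⟩))
  rw [← hsqrt, hzero, map_zero]

theorem denseRange_of_isSelfAdjoint_of_injective {S : H →L[ℂ] H} (hS : IsSelfAdjoint S)
    (hinj : Function.Injective S) : DenseRange S := by
  have hker : S.ker = ⊥ := LinearMap.ker_eq_bot.2 hinj
  have hrange : S.range.topologicalClosure = ⊤ := by
    rw [Submodule.topologicalClosure_eq_top_iff, S.orthogonal_range, hS.adjoint_eq, hker]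
  exact Submodule.dense_iff_topologicalClosure_eq_top.2 hrange

theorem tendsto_truncation_apply {S : H →L[ℂ] H} (hS : 0 ≤ S) (hinj : Function.Injective S)
    (x : H) : Tendsto (fun n => truncation S n x) atTop (𝓝 x) := by
  have hdense := denseRange_of_isSelfAdjoint_of_injective hS.isSelfAdjoint hinj
  have hequi : Equicontinuous fun n x => truncation S n x :=
    (LipschitzWith.uniformEquicontinuous _ 1 fun n =>
      (truncation S n).lipschitz.weaken (norm_truncation_le_one hS n)).equicontinuous
  refine hdense.induction_on (p := fun x => Tendsto (fun n => truncation S n x) atTop (𝓝 x)) x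
    (hequi.isClosed_setOfPred_tendsto continuous_id) fun y => ?_
  have hnorm : Tendsto (fun n => truncation S n * S) atTop (𝓝 S) :=
    tendsto_iff_norm_sub_tendsto_zero.2 <| squeeze_zero (fun _ => norm_nonneg _)
      (norm_truncation_mul_self_sub_le hS) tendsto_one_div_add_atTop_nhds_zero_nat
  exact ((apply ℂ H y).continuous.tendsto S).comp hnorm

end HilbertSpace

section StarAlgebra

variable {A : Type} [NonUnitalRing A] [Module ℂ A] [StarRing A]

section PositiveFunctionals

variable {f g h : A →ₗ[ℂ] ℂ}

theorem fnLE_iff : FnLE f g ↔ ∀ a, f (star a * a) ≤ g (star a * a) :=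
  forall_congr' fun _ => sub_nonneg

theorem FnLE.trans (hfg : FnLE f g) (hgh : FnLE g h) : FnLE f h :=
  fnLE_iff.2 fun a => (fnLE_iff.1 hfg a).trans (fnLE_iff.1 hgh a)

theorem fnLE_add_right (hg : IsPosFn g) : FnLE f (f + g) :=
  fnLE_iff.2 fun a => le_add_of_nonneg_right (hg a)

theorem fnLE_add_left (hg : IsPosFn g) : FnLE f (g + f) :=
  add_comm f g ▸ fnLE_add_right hg

theorem FnLE.of_tendsto_of_le_succ {F : ℕ → A →ₗ[ℂ] ℂ} (hmono : ∀ n, FnLE (F n) (F (n + 1)))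
    (hlim : ∀ a, Tendsto (fun n => F n a) atTop (𝓝 (f a))) (n : ℕ) : FnLE (F n) f :=
  fnLE_iff.2 fun a =>
    (monotone_nat_of_le_succ fun n => fnLE_iff.1 (hmono n) a).ge_of_tendsto (hlim _) n

end PositiveFunctionals

section Representations

variable {H : Type*} [NormedAddCommGroup H] [InnerProductSpace ℂ H] [CompleteSpace H]
  (π : A →⋆ₙₐ[ℂ] (H →L[ℂ] H)) (ξ : H)

theorem inner_rep_left (a : A) (x y : H) : ⟪π a x, y⟫_ℂ = ⟪x, π (star a) y⟫_ℂ := by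
  rw [map_star, star_eq_adjoint, adjoint_inner_right]

/-- The orbit map `a ↦ π a ξ`; its range is dense exactly when `ξ` is cyclic for `π`. -/
noncomputable def orbitMap : A →ₗ[ℂ] H where
  toFun a := π a ξ
  map_add' a b := by rw [map_add, add_apply]
  map_smul' c a := by rw [map_smul, smul_apply, RingHom.id_apply]

@[simp]
theorem orbitMap_apply (a : A) : orbitMap π ξ a = π a ξ := rfl

/-- The functional `a ↦ ⟪ξ, R (π a ξ)⟫`, linear in the weight `R`. For `R` in the commutant of `π`,
`R` is the Radon–Nikodym derivative of this functional with respect to the one with weight `1`. -/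
noncomputable def weightedFunctional : (H →L[ℂ] H) →ₗ[ℂ] A →ₗ[ℂ] ℂ :=
  LinearMap.mk₂ ℂ (fun R a => ⟪ξ, R (π a ξ)⟫_ℂ)
    (fun R S a => by rw [add_apply, inner_add_right])
    (fun c R a => by rw [smul_apply, inner_smul_right, smul_eq_mul])
    (fun R a b => by rw [map_add, add_apply, map_add, inner_add_right])
    (fun c R a => by rw [map_smul, smul_apply, map_smul, inner_smul_right, smul_eq_mul])

@[simp]
theorem weightedFunctional_apply (R : H →L[ℂ] H) (a : A) :
    weightedFunctional π ξ R a = ⟪ξ, R (π a ξ)⟫_ℂ := rfl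

/-- The vector functional `a ↦ ⟪ξ, π a ξ⟫` of the representation `π`. -/
noncomputable abbrev vectorFunctional : A →ₗ[ℂ] ℂ := weightedFunctional π ξ 1

theorem vectorFunctional_apply (a : A) : vectorFunctional π ξ a = ⟪ξ, π a ξ⟫_ℂ := rfl

theorem vectorFunctional_star_mul_self (a : A) :
    vectorFunctional π ξ (star a * a) = ((‖π a ξ‖ ^ 2 : ℝ) : ℂ) := by
  rw [vectorFunctional_apply, map_mul, mul_apply_eq_comp, ← inner_rep_left,
    inner_self_eq_norm_sq_to_K]
  simp

theorem isPosFn_vectorFunctional : IsPosFn (vectorFunctional π ξ) := fun a => by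
  rw [vectorFunctional_star_mul_self]
  exact_mod_cast sq_nonneg ‖π a ξ‖

section Commutant

variable {π ξ} {R S : H →L[ℂ] H}

theorem weightedFunctional_star_mul_self (hRπ : ∀ a, Commute R (π a)) (a : A) :
    weightedFunctional π ξ R (star a * a) = ⟪π a ξ, R (π a ξ)⟫_ℂ := by
  calc ⟪ξ, R (π (star a * a) ξ)⟫_ℂ = ⟪ξ, (R * π (star a)) (π a ξ)⟫_ℂ := by
        rw [map_mul, mul_apply_eq_comp, mul_apply_eq_comp]
    _ = ⟪π a ξ, R (π a ξ)⟫_ℂ := by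
        rw [(hRπ (star a)).eq, mul_apply_eq_comp, ← inner_rep_left]

theorem weightedFunctional_eq_vectorFunctional_sqrt (hR : 0 ≤ R) (hRπ : ∀ a, Commute R (π a)) :
    weightedFunctional π ξ R = vectorFunctional π (CFC.sqrt R ξ) := by
  ext a
  have hcomm : Commute (CFC.sqrt R) (π a) := by
    rw [CFC.sqrt_eq_cfc]
    exact (hRπ a).cfc_nnreal _
  have hself : adjoint (CFC.sqrt R) = CFC.sqrt R := (CFC.sqrt_nonneg R).isSelfAdjoint.adjoint_eq
  calc ⟪ξ, R (π a ξ)⟫_ℂ = ⟪ξ, CFC.sqrt R ((CFC.sqrt R * π a) ξ)⟫_ℂ := by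
        nth_rw 1 [← CFC.sqrt_mul_sqrt_self R]; rfl
    _ = ⟪CFC.sqrt R ξ, π a (CFC.sqrt R ξ)⟫_ℂ := by
        rw [hcomm.eq, ← adjoint_inner_left, hself, mul_apply_eq_comp]

theorem isPosFn_weightedFunctional (hR : 0 ≤ R) (hRπ : ∀ a, Commute R (π a)) :
    IsPosFn (weightedFunctional π ξ R) := fun a => by
  rw [weightedFunctional_star_mul_self hRπ]
  exact ((nonneg_iff_isPositive R).1 hR).inner_nonneg_right _

theorem nonneg_of_isPosFn_weightedFunctional (hξ : DenseRange (orbitMap π ξ))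
    (hRπ : ∀ a, Commute R (π a)) (hpos : IsPosFn (weightedFunctional π ξ R)) : 0 ≤ R := by
  have hinner (x : H) : 0 ≤ ⟪R x, x⟫_ℂ := by
    refine hξ.induction_on x (isClosed_le continuous_const (by fun_prop)) fun a => ?_
    rw [← inner_conj_symm, orbitMap_apply, ← weightedFunctional_star_mul_self hRπ]
    exact star_nonneg_iff.2 (hpos a)
  rw [nonneg_iff_isPositive, isPositive_iff_complex]
  intro x
  obtain ⟨r, hr, hrx⟩ := RCLike.nonneg_iff_exists_ofReal.1 (hinner x)
  rw [← hrx]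
  exact ⟨by simp, by simpa using hr⟩

theorem weightedFunctional_mono (hRS : R ≤ S) (hRπ : ∀ a, Commute R (π a))
    (hSπ : ∀ a, Commute S (π a)) :
    FnLE (weightedFunctional π ξ R) (weightedFunctional π ξ S) := by
  rw [FnLE, ← map_sub]
  exact isPosFn_weightedFunctional (sub_nonneg.2 hRS) fun a => (hSπ a).sub_left (hRπ a)

theorem le_of_fnLE_weightedFunctional (hξ : DenseRange (orbitMap π ξ))
    (hRπ : ∀ a, Commute R (π a)) (hSπ : ∀ a, Commute S (π a))
    (hle : FnLE (weightedFunctional π ξ R) (weightedFunctional π ξ S)) : R ≤ S := by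
  rw [FnLE, ← map_sub] at hle
  exact sub_nonneg.1 <|
    nonneg_of_isPosFn_weightedFunctional hξ (fun a => (hSπ a).sub_left (hRπ a)) hle

theorem eq_of_weightedFunctional_eq (hξ : DenseRange (orbitMap π ξ))
    (hRπ : ∀ a, Commute R (π a)) (hSπ : ∀ a, Commute S (π a))
    (h : weightedFunctional π ξ R = weightedFunctional π ξ S) : R = S :=
  le_antisymm (le_of_fnLE_weightedFunctional hξ hRπ hSπ (fnLE_iff.2 fun _ => by rw [h]))
    (le_of_fnLE_weightedFunctional hξ hSπ hRπ (fnLE_iff.2 fun _ => by rw [h]))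

end Commutant

section CyclicSubspace

/-- The closure of the orbit of `ξ` under `π`. As `A` need not be unital, `ξ` may lie outside; the
cyclic vector of the subrepresentation is then the projection of `ξ`. -/
noncomputable def cyclicSubspace : Submodule ℂ H :=
  (LinearMap.range (orbitMap π ξ)).topologicalClosure

instance : CompleteSpace (cyclicSubspace π ξ) :=
  (Submodule.isClosed_topologicalClosure _).completeSpace_coe

variable {π ξ} in
theorem mem_cyclicSubspace {x : H} :
    x ∈ cyclicSubspace π ξ ↔ x ∈ closure (Set.range (orbitMap π ξ)) := Iff.rfl

theorem rep_apply_mem_cyclicSubspace (a : A) : π a ξ ∈ cyclicSubspace π ξ :=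
  subset_closure ⟨a, rfl⟩

variable {ξ} in
theorem rep_apply_mem_cyclicSubspace_of_mem (a : A) {x : H} (hx : x ∈ cyclicSubspace π ξ) :
    π a x ∈ cyclicSubspace π ξ := by
  refine map_mem_closure (π a).continuous hx ?_
  rintro _ ⟨b, rfl⟩
  exact ⟨a * b, by simp⟩

/-- The subrepresentation of `π` on the cyclic subspace of `ξ`. -/
noncomputable def cyclicRep : A →⋆ₙₐ[ℂ] (cyclicSubspace π ξ →L[ℂ] cyclicSubspace π ξ) where
  toFun a := (π a).restrict fun _ => rep_apply_mem_cyclicSubspace_of_mem π a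
  map_smul' c a := by ext x; simp
  map_zero' := by ext x; simp
  map_add' a b := by ext x; simp
  map_mul' a b := by ext x; simp
  map_star' a := by
    rw [star_eq_adjoint, eq_adjoint_iff]
    intro x y
    simp [inner_rep_left]

theorem rep_apply_starProjection_cyclicSubspace (a : A) :
    π a ((cyclicSubspace π ξ).starProjection ξ) = π a ξ := by
  set η := (cyclicSubspace π ξ).starProjection ξ
  have hη : η ∈ cyclicSubspace π ξ := Submodule.starProjection_apply_mem _ ξ
  have hmem : π a (ξ - η) ∈ cyclicSubspace π ξ := by
    rw [map_sub]
    exact sub_mem (rep_apply_mem_cyclicSubspace π ξ a) (rep_apply_mem_cyclicSubspace_of_mem π a hη)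
  have hzero : ⟪π a (ξ - η), π a (ξ - η)⟫_ℂ = 0 := by
    rw [inner_rep_left]
    exact Submodule.starProjection_inner_eq_zero ξ _
      (rep_apply_mem_cyclicSubspace_of_mem π (star a) hmem)
  rw [inner_self_eq_zero, map_sub, sub_eq_zero] at hzero
  exact hzero.symm

end CyclicSubspace

end Representations

theorem isRepresentable_vectorFunctional {H : Type} [NormedAddCommGroup H] [InnerProductSpace ℂ H]
    [CompleteSpace H] (π : A →⋆ₙₐ[ℂ] (H →L[ℂ] H)) (ξ : H) :
    IsRepresentable (vectorFunctional π ξ) := by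
  set η : cyclicSubspace π ξ := (cyclicSubspace π ξ).orthogonalProjectionOnto ξ
  have horbit (a : A) : (cyclicRep π ξ a η : H) = π a ξ :=
    rep_apply_starProjection_cyclicSubspace π ξ a
  refine ⟨cyclicSubspace π ξ, inferInstance, inferInstance, inferInstance, cyclicRep π ξ, η,
    fun x => ?_, fun a => ?_⟩
  · rw [closure_subtype, ← Set.range_comp]
    convert mem_cyclicSubspace.1 x.2
    exact funext horbit
  · rw [vectorFunctional_apply, Submodule.coe_inner, horbit]
    refine sub_eq_zero.1 ?_
    rw [← inner_sub_left]
    exact Submodule.starProjection_inner_eq_zero ξ _ (rep_apply_mem_cyclicSubspace π ξ a)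

section DirectSum

variable {H₁ H₂ : Type*} [NormedAddCommGroup H₁] [InnerProductSpace ℂ H₁] [CompleteSpace H₁]
  [NormedAddCommGroup H₂] [InnerProductSpace ℂ H₂] [CompleteSpace H₂]

/-- The direct sum of two representations, on the Hilbert sum of their spaces. -/
noncomputable def sumRep (π₁ : A →⋆ₙₐ[ℂ] (H₁ →L[ℂ] H₁)) (π₂ : A →⋆ₙₐ[ℂ] (H₂ →L[ℂ] H₂)) :
    A →⋆ₙₐ[ℂ] (WithLp 2 (H₁ × H₂) →L[ℂ] WithLp 2 (H₁ × H₂)) where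
  toFun a :=
    (WithLp.prodContinuousLinearEquiv 2 ℂ H₁ H₂).symm.conjContinuousAlgEquiv
      ((π₁ a).prodMap (π₂ a))
  map_smul' c a := by rw [map_smul, map_smul]; rfl
  map_zero' := by rw [map_zero, map_zero]; rfl
  map_add' a b := by rw [map_add, map_add]; rfl
  map_mul' a b := by rw [map_mul, map_mul]; rfl
  map_star' a := by
    rw [star_eq_adjoint, eq_adjoint_iff]
    intro x y
    simp [inner_rep_left]

theorem vectorFunctional_sumRep (π₁ : A →⋆ₙₐ[ℂ] (H₁ →L[ℂ] H₁)) (π₂ : A →⋆ₙₐ[ℂ] (H₂ →L[ℂ] H₂))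
    (ξ₁ : H₁) (ξ₂ : H₂) :
    vectorFunctional (sumRep π₁ π₂) (WithLp.toLp 2 (ξ₁, ξ₂)) =
      vectorFunctional π₁ ξ₁ + vectorFunctional π₂ ξ₂ := rfl

end DirectSum

theorem IsRepresentable.exists_vectorFunctional {f : A →ₗ[ℂ] ℂ} (hf : IsRepresentable f) :
    ∃ (H : Type) (_ : NormedAddCommGroup H) (_ : InnerProductSpace ℂ H) (_ : CompleteSpace H)
      (π : A →⋆ₙₐ[ℂ] (H →L[ℂ] H)) (ξ : H),
      DenseRange (orbitMap π ξ) ∧ f = vectorFunctional π ξ := by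
  obtain ⟨H, _, _, _, π, ξ, hξ, hfξ⟩ := hf
  exact ⟨H, inferInstance, inferInstance, inferInstance, π, ξ, hξ, LinearMap.ext hfξ⟩

theorem IsRepresentable.isPosFn {f : A →ₗ[ℂ] ℂ} (hf : IsRepresentable f) : IsPosFn f := by
  obtain ⟨H, _, _, _, π, ξ, -, rfl⟩ := hf.exists_vectorFunctional
  exact isPosFn_vectorFunctional π ξ

theorem IsRepresentable.add {f g : A →ₗ[ℂ] ℂ} (hf : IsRepresentable f) (hg : IsRepresentable g) :
    IsRepresentable (f + g) := by
  obtain ⟨H₁, _, _, _, π₁, ξ₁, -, rfl⟩ := hf.exists_vectorFunctional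
  obtain ⟨H₂, _, _, _, π₂, ξ₂, -, rfl⟩ := hg.exists_vectorFunctional
  rw [← vectorFunctional_sumRep]
  exact isRepresentable_vectorFunctional _ _

theorem isRepresentable_zero : IsRepresentable (0 : A →ₗ[ℂ] ℂ) := by
  convert isRepresentable_vectorFunctional (0 : A →⋆ₙₐ[ℂ] (ℂ →L[ℂ] ℂ)) 0
  ext a
  simp

section Weighted

variable {H : Type} [NormedAddCommGroup H] [InnerProductSpace ℂ H] [CompleteSpace H]
  {π : A →⋆ₙₐ[ℂ] (H →L[ℂ] H)} {ξ : H} {S T : H →L[ℂ] H}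

theorem isRepresentable_weightedFunctional (hT : 0 ≤ T) (hTπ : ∀ a, Commute T (π a)) :
    IsRepresentable (weightedFunctional π ξ T) := by
  rw [weightedFunctional_eq_vectorFunctional_sqrt hT hTπ]
  exact isRepresentable_vectorFunctional π _

theorem absContR_weightedFunctional (hT : 0 ≤ T) (hS : 0 ≤ S) (hTS : Commute T S)
    (hTπ : ∀ a, Commute T (π a)) (hSπ : ∀ a, Commute S (π a)) (hinj : Function.Injective S) :
    AbsContR (weightedFunctional π ξ T) (weightedFunctional π ξ S) := by
  have hcomm (n : ℕ) : Commute T (truncation S n) := (commute_truncation_left hTS.symm n).symm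
  have hcommπ (n : ℕ) (a : A) : Commute (T * truncation S n) (π a) :=
    (hTπ a).mul_left (commute_truncation_left (hSπ a) n)
  have hT_le : T ≤ (‖T‖ + 1) • (1 : H →L[ℂ] H) := by
    rw [add_smul, one_smul, ← Algebra.algebraMap_eq_smul_one]
    exact hT.isSelfAdjoint.le_algebraMap_norm_self.trans (le_add_of_nonneg_right zero_le_one)
  have hnonneg (n : ℕ) : 0 ≤ T * truncation S n := (hcomm n).mul_nonneg hT (truncation_nonneg hS n)
  refine ⟨fun n => weightedFunctional π ξ (T * truncation S n), fun n => (‖T‖ + 1) * (n + 1),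
    fun n => ⟨isRepresentable_weightedFunctional (hnonneg n) (hcommπ n),
      isPosFn_weightedFunctional (hnonneg n) (hcommπ n)⟩,
    fun n => by positivity, fun n => ?_, fun n => ?_, fun a => ?_⟩
  · refine weightedFunctional_mono ?_ (hcommπ n) (hcommπ (n + 1))
    rw [← sub_nonneg, ← mul_sub]
    exact ((hcomm (n + 1)).sub_right (hcomm n)).mul_nonneg hT
      (sub_nonneg.2 (truncation_mono hS n.le_succ))
  · rw [← map_smul]
    refine weightedFunctional_mono ?_ (hcommπ n) fun a => (hSπ a).smul_left _
    calc T * truncation S n ≤ (‖T‖ + 1) • truncation S n := by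
          rw [← sub_nonneg, ← smul_one_mul, ← sub_mul]
          exact (((Commute.one_left _).smul_left _).sub_left (hcomm n)).mul_nonneg
            (sub_nonneg.2 hT_le) (truncation_nonneg hS n)
      _ ≤ (‖T‖ + 1) • ((n : ℝ) + 1) • S := by gcongr; exact truncation_le_smul hS n
      _ = (((‖T‖ + 1) * (n + 1) : ℝ) : ℂ) • S := by rw [smul_smul]; rfl
  · exact tendsto_const_nhds.inner
      ((T.continuous.tendsto _).comp (tendsto_truncation_apply hS hinj (π a ξ)))

end Weighted

section RadonNikodym

variable {H H₁ : Type*} [NormedAddCommGroup H] [InnerProductSpace ℂ H] [CompleteSpace H]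
  [NormedAddCommGroup H₁] [InnerProductSpace ℂ H₁] [CompleteSpace H₁]
  {π : A →⋆ₙₐ[ℂ] (H →L[ℂ] H)} {ξ : H} {π₁ : A →⋆ₙₐ[ℂ] (H₁ →L[ℂ] H₁)} {ξ₁ : H₁}

theorem norm_orbitMap_le_of_fnLE (hle : FnLE (vectorFunctional π₁ ξ₁) (vectorFunctional π ξ))
    (a : A) : ‖orbitMap π₁ ξ₁ a‖ ≤ ‖orbitMap π ξ a‖ := by
  have hsq := fnLE_iff.1 hle a
  rw [vectorFunctional_star_mul_self, vectorFunctional_star_mul_self] at hsq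
  exact pow_le_pow_iff_left₀ (norm_nonneg _) (norm_nonneg _) two_ne_zero |>.1
    (by exact_mod_cast hsq)

theorem exists_intertwiner_of_fnLE (hξ : DenseRange (orbitMap π ξ))
    (hle : FnLE (vectorFunctional π₁ ξ₁) (vectorFunctional π ξ)) :
    ∃ V : H →L[ℂ] H₁, (∀ a, V (π a ξ) = π₁ a ξ₁) ∧ ∀ a x, V (π a x) = π₁ a (V x) := by
  have hV (a : A) : (orbitMap π₁ ξ₁).extendOfNorm (orbitMap π ξ) (π a ξ) = π₁ a ξ₁ :=
    LinearMap.extendOfNorm_eq hξ ⟨1, fun a => by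
      rw [one_mul]; exact norm_orbitMap_le_of_fnLE hle a⟩ a
  refine ⟨_, hV, fun a x => hξ.induction_on x (isClosed_eq (by fun_prop) (by fun_prop)) fun b => ?_⟩
  rw [orbitMap_apply, hV, ← mul_apply_eq_comp, ← map_mul, hV, map_mul, mul_apply_eq_comp]

theorem commute_adjoint_comp_self {V : H →L[ℂ] H₁} (hV : ∀ a x, V (π a x) = π₁ a (V x)) (a : A) :
    Commute (adjoint V ∘L V) (π a) := by
  ext x
  refine ext_inner_left ℂ fun y => ?_
  calc ⟪y, adjoint V (V (π a x))⟫_ℂ = ⟪V (π (star a) y), V x⟫_ℂ := by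
        rw [adjoint_inner_right, hV, hV, inner_rep_left, star_star]
    _ = ⟪y, π a (adjoint V (V x))⟫_ℂ := by
        rw [← adjoint_inner_right, inner_rep_left, star_star]

theorem weightedFunctional_adjoint_comp_self {V : H →L[ℂ] H₁} (hVξ : ∀ a, V (π a ξ) = π₁ a ξ₁)
    (hV : ∀ a x, V (π a x) = π₁ a (V x)) :
    weightedFunctional π ξ (adjoint V ∘L V) = vectorFunctional π₁ ξ₁ := by
  ext a
  calc ⟪ξ, adjoint V (V (π a ξ))⟫_ℂ = ⟪V (π (star a) ξ), ξ₁⟫_ℂ := by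
        rw [adjoint_inner_right, hVξ, hV, inner_rep_left, star_star]
    _ = ⟪ξ₁, π₁ a ξ₁⟫_ℂ := by rw [hVξ, inner_rep_left, star_star]

theorem IsRepresentable.exists_eq_weightedFunctional {f : A →ₗ[ℂ] ℂ} (hf : IsRepresentable f)
    (hξ : DenseRange (orbitMap π ξ)) (hle : FnLE f (vectorFunctional π ξ)) :
    ∃ T : H →L[ℂ] H, 0 ≤ T ∧ (∀ a, Commute T (π a)) ∧ f = weightedFunctional π ξ T := by
  obtain ⟨H₁, _, _, _, π₁, ξ₁, -, rfl⟩ := hf.exists_vectorFunctional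
  obtain ⟨V, hVξ, hV⟩ := exists_intertwiner_of_fnLE hξ hle
  exact ⟨adjoint V ∘L V, (nonneg_iff_isPositive _).2 (isPositive_adjoint_comp_self V),
    commute_adjoint_comp_self hV, (weightedFunctional_adjoint_comp_self hVξ hV).symm⟩

end RadonNikodym

section AbsoluteContinuity

variable {H : Type*} [NormedAddCommGroup H] [InnerProductSpace ℂ H] [CompleteSpace H]
  {π : A →⋆ₙₐ[ℂ] (H →L[ℂ] H)} {ξ : H} {S F : H →L[ℂ] H}

theorem AbsContR.apply_eq_zero
    (hac : AbsContR (weightedFunctional π ξ F) (weightedFunctional π ξ S))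
    (hξ : DenseRange (orbitMap π ξ)) (hF₀ : 0 ≤ F) (hF₁ : F ≤ 1) (hFπ : ∀ a, Commute F (π a))
    (hSπ : ∀ a, Commute S (π a)) {x : H} (hx : S x = 0) : F x = 0 := by
  obtain ⟨fn, α, hrep, -, hmono, hdom, hlim⟩ := hac
  have hle (n : ℕ) : FnLE (fn n) (vectorFunctional π ξ) :=
    FnLE.trans (.of_tendsto_of_le_succ hmono hlim n)
      (weightedFunctional_mono hF₁ hFπ fun _ => .one_left _)
  choose R hR₀ hRπ hfn using fun n => (hrep n).1.exists_eq_weightedFunctional hξ (hle n)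
  obtain rfl : fn = fun n => weightedFunctional π ξ (R n) := funext hfn
  have hR₁ (n : ℕ) : R n ≤ 1 :=
    le_of_fnLE_weightedFunctional hξ (hRπ n) (fun _ => .one_left _) (hle n)
  have hRx (n : ℕ) : R n x = 0 := by
    have hRS : R n ≤ (α n : ℂ) • S := by
      refine le_of_fnLE_weightedFunctional hξ (hRπ n) (fun a => (hSπ a).smul_left _) ?_
      rw [map_smul]
      exact hdom n
    exact apply_eq_zero_of_inner_le_zero (hR₀ n) <| by
      simpa [hx] using inner_apply_le_inner_apply hRS x
  -- As `R n x = 0`, replacing `y` by `y - x` does not change the form of `R n`; the resulting bound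
  -- is uniform in `n`, so it passes to `F` on the orbit, and by density to `y = x`.
  have hbound (n : ℕ) (y : H) : ⟪y, R n y⟫_ℂ ≤ ⟪y - x, y - x⟫_ℂ := by
    have hsymm : ⟪x, R n y⟫_ℂ = 0 := by
      rw [← adjoint_inner_left, (hR₀ n).isSelfAdjoint.adjoint_eq, hRx, inner_zero_left]
    simpa [hRx, inner_sub_left, hsymm] using inner_apply_le_inner_apply (hR₁ n) (y - x)
  have hFbound (y : H) : ⟪y, F y⟫_ℂ ≤ ⟪y - x, y - x⟫_ℂ := by
    refine hξ.induction_on y (isClosed_le (by fun_prop) (by fun_prop)) fun a => ?_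
    rw [orbitMap_apply, ← weightedFunctional_star_mul_self hFπ]
    refine le_of_tendsto' (hlim _) fun n => ?_
    rw [weightedFunctional_star_mul_self (hRπ n)]
    exact hbound n _
  exact apply_eq_zero_of_inner_le_zero hF₀ (by simpa using hFbound x)

end AbsoluteContinuity

theorem AbsContR.of_fnLE_of_fnLE_smul {f g h : A →ₗ[ℂ] ℂ} {c : ℂ} (hac : AbsContR f g)
    (hf : IsRepresentable f) (hg : IsRepresentable g) (hh : IsRepresentable h)
    (hfh : FnLE f h) (hhf : FnLE h (c • f)) : AbsContR h g := by
  obtain ⟨H, _, _, _, π, ξ, hξ, hsum⟩ := (hh.add hg).exists_vectorFunctional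
  have hh_le : FnLE h (vectorFunctional π ξ) := hsum ▸ fnLE_add_right hg.isPosFn
  obtain ⟨F, hF, hFπ, rfl⟩ := hf.exists_eq_weightedFunctional hξ (hfh.trans hh_le)
  obtain ⟨T, hT, hTπ, rfl⟩ := hh.exists_eq_weightedFunctional hξ hh_le
  obtain ⟨S, hS, hSπ, rfl⟩ := hg.exists_eq_weightedFunctional hξ (hsum ▸ fnLE_add_left hh.isPosFn)
  have hTS : T + S = 1 := by
    refine eq_of_weightedFunctional_eq hξ (fun a => (hTπ a).add_left (hSπ a))
      (fun _ => .one_left _) ?_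
    rw [map_add, hsum]
  have hTS_comm : Commute T S := eq_sub_of_add_eq' hTS ▸ (Commute.one_right T).sub_right (.refl T)
  have hF_le : F ≤ T := le_of_fnLE_weightedFunctional hξ hFπ hTπ hfh
  have hF₁ : F ≤ 1 := hF_le.trans (hTS ▸ le_add_of_nonneg_right hS)
  have hTF : T ≤ c • F := by
    refine le_of_fnLE_weightedFunctional hξ hTπ (fun a => (hFπ a).smul_left c) ?_
    rwa [map_smul]
  refine absContR_weightedFunctional hT hS hTS_comm hTπ hSπ <|
    (injective_iff_map_eq_zero S).2 fun x hx => ?_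
  have hFx : F x = 0 := hac.apply_eq_zero hξ hF hF₁ hFπ hSπ hx
  have hTx : T x = 0 := apply_eq_zero_of_inner_le_zero hT <| by
    simpa [hFx] using inner_apply_le_inner_apply hTF x
  calc x = (T + S) x := by rw [hTS, one_apply_eq_self]
    _ = 0 := by rw [add_apply, hTx, hx, add_zero]

theorem singularR_zero (g : A →ₗ[ℂ] ℂ) : SingularR 0 g := by
  intro q hq _ hq_le _
  obtain ⟨H, _, _, _, π, ξ, hξ, rfl⟩ := hq.exists_vectorFunctional
  have hone : (1 : H →L[ℂ] H) ≤ 0 := by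
    refine le_of_fnLE_weightedFunctional hξ (fun _ => .one_left _) (fun _ => .zero_left _) ?_
    rwa [map_zero]
  rw [vectorFunctional, hone.antisymm zero_le_one, map_zero]

end StarAlgebra

/-- **Remark 2.3**: if `p ≤ f ≪ g`, `p ⊥ g` and `p ≠ 0`, then the Lebesgue decomposition of
`h := f + p` with respect to `g` is not unique. -/
theorem lebesgue_decomposition_not_unique_of_singular_le
    {A : Type} [NonUnitalRing A] [Module ℂ A] [SMulCommClass ℂ A A]
    [IsScalarTower ℂ A A] [StarRing A] [StarModule ℂ A]
    (p f g : A →ₗ[ℂ] ℂ)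
    (hpR : IsRepresentable p) (hpP : IsPosFn p)
    (hfR : IsRepresentable f) (hfP : IsPosFn f)
    (hgR : IsRepresentable g) (hgP : IsPosFn g)
    (hpf : FnLE p f) (hac : AbsContR f g) (hsing : SingularR p g) (hp0 : p ≠ 0) :
    ¬ LebDecompUniqueForR (f + p) g := by
  intro huniq
  have hfp_le : FnLE (f + p) ((2 : ℂ) • f) := by
    rw [two_smul, FnLE, add_sub_add_left_eq_sub]
    exact hpf
  have hac_add : AbsContR (f + p) g :=
    hac.of_fnLE_of_fnLE_smul hfR hgR (hfR.add hpR) (fnLE_add_right hpP) hfp_le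
  have hdecomp : IsLebDecompR (f + p) g f p := ⟨hfR, hfP, hpR, hpP, rfl, hac, hsing⟩
  have hdecomp_zero : IsLebDecompR (f + p) g (f + p) 0 :=
    ⟨hfR.add hpR, (hfR.add hpR).isPosFn, isRepresentable_zero, isRepresentable_zero.isPosFn,
      (add_zero _).symm, hac_add, singularR_zero g⟩
  exact hp0 (huniq _ _ _ _ hdecomp hdecomp_zero).2
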